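/- Let G be a simple graph with Δ := Δ(G) ≥ 2, ν := ν(G) ≥ 2, such that ⌈Δ/2⌉ divides ν and |E(G)| = Δν + (ν/⌈Δ/2⌉)·⌊Δ/2⌋. Then every connected component D of G satisfies ν(D) = ⌈Δ/2⌉ and |E(D)| = Δ⌈Δ/2⌉ + ⌊Δ/2⌋. -/

import Mathlib

open scoped Classical

/-- `M` is a matching of `G`, given as a finite set of edges. -/
def IsMatchingFinset {V : Type*} (G : SimpleGraph V) (M : Finset (Sym2 V)) : Prop :=
  (M : Set (Sym2 V)) ⊆ G.edgeSet ∧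
    ∀ e ∈ M, ∀ f ∈ M, e ≠ f → ∀ v : V, ¬(v ∈ e ∧ v ∈ f)

/-- ν(G): the maximum size of a matching of `G`. -/
noncomputable def matchingNumber {V : Type*} (G : SimpleGraph V) : ℕ :=
  sSup {n | ∃ M : Finset (Sym2 V), IsMatchingFinset G M ∧ M.card = n}

/-- A proper edge coloring of `G` using colors `< n`. -/
def IsProperEdgeColoring {V : Type*} (G : SimpleGraph V) (n : ℕ) (c : Sym2 V → ℕ) : Prop :=
  (∀ e ∈ G.edgeSet, c e < n) ∧
    ∀ e ∈ G.edgeSet, ∀ f ∈ G.edgeSet, e ≠ f → (∃ v : V, v ∈ e ∧ v ∈ f) → c e ≠ c f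

/-- χ'(G): the edge chromatic index of `G`. -/
noncomputable def chromaticIndex {V : Type*} (G : SimpleGraph V) : ℕ :=
  sInf {n | ∃ c : Sym2 V → ℕ, IsProperEdgeColoring G n c}

/-- `G` is friendly-edge-colorable: its edge set is partitioned into maximum matchings. -/
noncomputable def Friendly {V : Type*} [Fintype V] (G : SimpleGraph V) : Prop :=
  ∃ P : Finset (Finset (Sym2 V)),
    (∀ M ∈ P, IsMatchingFinset G M ∧ M.card = matchingNumber G) ∧
    (∀ e, e ∈ G.edgeFinset ↔ ∃ M ∈ P, e ∈ M) ∧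
    ∀ M ∈ P, ∀ N ∈ P, M ≠ N → Disjoint M N

/-- The graph `G` with vertex `x` deleted. -/
def delVert {V : Type*} (G : SimpleGraph V) (x : V) : SimpleGraph {v : V // v ≠ x} :=
  G.induce {v : V | v ≠ x}

/-- `G` has a perfect matching. -/
def HasPerfectMatchingFinset {V : Type*} (G : SimpleGraph V) : Prop :=
  ∃ M : Finset (Sym2 V), IsMatchingFinset G M ∧ ∀ v : V, ∃ e ∈ M, v ∈ e

/-- `G` is factor-critical. -/
def FactorCritical {V : Type*} (G : SimpleGraph V) : Prop :=
  G.Connected ∧ ∀ x : V, HasPerfectMatchingFinset (delVert G x)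

/-- The vertex `v` is covered by `M`. -/
def Cov {V : Type*} (M : Finset (Sym2 V)) (v : V) : Prop := ∃ e ∈ M, v ∈ e

/-- `M` is a maximum matching. -/
def MaxM {V : Type*} (G : SimpleGraph V) (M : Finset (Sym2 V)) : Prop :=
  IsMatchingFinset G M ∧ M.card = matchingNumber G

lemma card_cov {V : Type*} [Fintype V] (G : SimpleGraph V) (M : Finset (Sym2 V))
    (hM : IsMatchingFinset G M) : (Finset.univ.filter (Cov M)).card = 2 * M.card := by
  have h1 : Finset.univ.filter (Cov M) = M.biUnion (fun e => e.toFinset) := by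
    ext v; simp [Cov]
  rw [h1, Finset.card_biUnion]
  · rw [Finset.sum_congr rfl (g := fun _ => 2)]
    · simp [mul_comm]
    · intro e he
      exact Sym2.card_toFinset_of_not_isDiag e (G.not_isDiag_of_mem_edgeSet (hM.1 he))
  · intro e he f hf hne
    refine Finset.disjoint_left.2 ?_
    intro v hv hv'
    simp only [Sym2.mem_toFinset] at hv hv'
    exact hM.2 e he f hf hne v ⟨hv, hv'⟩

lemma two_card_le {V : Type*} [Fintype V] (G : SimpleGraph V) (M : Finset (Sym2 V))
    (hM : IsMatchingFinset G M) : 2 * M.card ≤ Fintype.card V := by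
  rw [← card_cov G M hM]
  exact Finset.card_le_univ _

lemma bddM {V : Type*} [Fintype V] (G : SimpleGraph V) :
    BddAbove {n | ∃ M : Finset (Sym2 V), IsMatchingFinset G M ∧ M.card = n} := by
  refine ⟨Fintype.card V, ?_⟩
  rintro n ⟨M, hM, rfl⟩
  have := two_card_le G M hM
  omega

lemma exists_maxM {V : Type*} [Fintype V] (G : SimpleGraph V) : ∃ M, MaxM G M := by
  have := Nat.sSup_mem (s := {n | ∃ M : Finset (Sym2 V), IsMatchingFinset G M ∧ M.card = n})
    ⟨0, ∅, ⟨by simp, by simp⟩, rfl⟩ (bddM G)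
  exact this

lemma card_le_mn {V : Type*} [Fintype V] (G : SimpleGraph V) (M : Finset (Sym2 V))
    (hM : IsMatchingFinset G M) : M.card ≤ matchingNumber G :=
  le_csSup (bddM G) ⟨M, hM, rfl⟩

lemma isMatching_insert {V : Type*} (G : SimpleGraph V) (M : Finset (Sym2 V))
    (hM : IsMatchingFinset G M) (e : Sym2 V) (he : e ∈ G.edgeSet)
    (h : ∀ v ∈ e, ¬ Cov M v) : IsMatchingFinset G (insert e M) := by
  refine ⟨?_, ?_⟩
  · intro f hf
    simp only [Finset.coe_insert, Set.mem_insert_iff, Finset.mem_coe] at hf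
    rcases hf with rfl | hf
    · exact he
    · exact hM.1 hf
  · intro f hf g hg hne v hv
    simp only [Finset.mem_insert] at hf hg
    rcases hf with rfl | hf <;> rcases hg with rfl | hg
    · exact hne rfl
    · exact h v hv.1 ⟨g, hg, hv.2⟩
    · exact h v hv.2 ⟨f, hf, hv.1⟩
    · exact hM.2 f hf g hg hne v hv

lemma isMatching_subset {V : Type*} (G : SimpleGraph V) (M N : Finset (Sym2 V))
    (hM : IsMatchingFinset G M) (h : N ⊆ M) : IsMatchingFinset G N :=
  ⟨fun _ hf => hM.1 (h hf), fun e he f hf => hM.2 e (h he) f (h hf)⟩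

lemma not_both {V : Type*} [Fintype V] (G : SimpleGraph V) (M : Finset (Sym2 V))
    (hM : MaxM G M) (u v : V) (huv : G.Adj u v) (hu : ¬ Cov M u) (hv : ¬ Cov M v) : False := by
  have h1 := isMatching_insert G M hM.1 s(u, v) huv (by
    intro w hw
    rcases Sym2.mem_iff.1 hw with rfl | rfl <;> assumption)
  have h2 := card_le_mn G _ h1
  rw [Finset.card_insert_of_notMem] at h2
  · have := hM.2; omega
  · intro h
    exact hu ⟨_, h, by simp⟩

/-- No maximum matching misses two distinct vertices `u`, `v`. -/
def NRel {V : Type*} (G : SimpleGraph V) (u v : V) : Prop :=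
  ∀ M, MaxM G M → ¬ Cov M u → ¬ Cov M v → u = v

lemma gallai_trans {V : Type*} [Fintype V] (G : SimpleGraph V)
    (hall : ∀ v, ∃ N, MaxM G N ∧ ¬ Cov N v) (u t v : V) (hut : NRel G u t) (htv : NRel G t v) :
    NRel G u v := by
  intro M hM hu hv
  by_contra huv
  have htM : Cov M t := by
    by_contra h
    have h1 := hut M hM hu h
    have h2 := htv M hM h hv
    exact huv (h1.trans h2)
  obtain ⟨N₀, hN₀⟩ := hall t
  obtain ⟨N, hN, hmax⟩ := Finset.exists_max_image
    (Finset.univ.filter (fun N => MaxM G N ∧ ¬ Cov N t)) (fun N => (M ∩ N).card)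
    ⟨N₀, by simpa using hN₀⟩
  simp only [Finset.mem_filter, Finset.mem_univ, true_and] at hN hmax
  obtain ⟨hN, hNt⟩ := hN
  have hNu : Cov N u := by
    by_contra h
    have := hut N hN h hNt
    subst this
    exact hu htM
  have hNv : Cov N v := by
    by_contra h
    have := htv N hN hNt h
    subst this
    exact hv htM
  obtain ⟨x, hxt, hxM, hxN⟩ : ∃ x, x ≠ t ∧ Cov M x ∧ ¬ Cov N x := by
    by_contra! hcon
    have hsub : Finset.univ.filter (Cov M) ⊆
        insert t (((Finset.univ.filter (Cov N)).erase u).erase v) := by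
      intro x hx
      simp only [Finset.mem_filter, Finset.mem_univ, true_and, Finset.mem_insert,
        Finset.mem_erase] at hx ⊢
      by_cases hxt : x = t
      · exact Or.inl hxt
      · refine Or.inr ⟨?_, ?_, hcon x hxt hx⟩
        · rintro rfl; exact hv hx
        · rintro rfl; exact hu hx
    have h1 := Finset.card_le_card hsub
    have h2 := Finset.card_insert_le t (((Finset.univ.filter (Cov N)).erase u).erase v)
    have h3 : v ∈ (Finset.univ.filter (Cov N)).erase u := by
      simp [hNv, Ne.symm huv]
    have h4 : u ∈ Finset.univ.filter (Cov N) := by simp [hNu]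
    have h5 := Finset.card_erase_add_one h3
    have h6 := Finset.card_erase_add_one h4
    rw [card_cov G M hM.1, hM.2] at h1
    rw [card_cov G N hN.1, hN.2] at h6
    omega
  obtain ⟨e, heM, hxe⟩ := hxM
  obtain ⟨y, rfl⟩ := hxe
  have hxy : G.Adj x y := hM.1.1 heM
  have hyN : Cov N y := by
    by_contra h
    exact not_both G N hN x y hxy hxN h
  obtain ⟨f, hfN, hyf⟩ := hyN
  have heN : s(x, y) ∉ N := fun h => hxN ⟨_, h, by simp⟩
  have hfM : f ∉ M := by
    intro h
    refine hM.1.2 _ heM f h ?_ y ⟨by simp, hyf⟩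
    rintro rfl
    exact heN hfN
  have hyt : y ≠ t := by
    rintro rfl
    exact hNt ⟨f, hfN, hyf⟩
  have hN'1 : IsMatchingFinset G (insert s(x, y) (N.erase f)) := by
    apply isMatching_insert G _ (isMatching_subset G N _ hN.1 (Finset.erase_subset _ _)) _ hxy
    rintro w hw ⟨g, hg, hwg⟩
    rw [Finset.mem_erase] at hg
    rcases Sym2.mem_iff.1 hw with rfl | rfl
    · exact hxN ⟨g, hg.2, hwg⟩
    · exact hN.1.2 g hg.2 f hfN hg.1 w ⟨hwg, hyf⟩
  have hN'2 : (insert s(x, y) (N.erase f)).card = matchingNumber G := by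
    rw [Finset.card_insert_of_notMem (fun h => heN (Finset.mem_of_mem_erase h)),
      Finset.card_erase_add_one hfN, hN.2]
  have hN't : ¬ Cov (insert s(x, y) (N.erase f)) t := by
    rintro ⟨g, hg, htg⟩
    rcases Finset.mem_insert.1 hg with rfl | hg
    · rcases Sym2.mem_iff.1 htg with h | h
      · exact hxt h.symm
      · exact hyt h.symm
    · exact hNt ⟨g, Finset.mem_of_mem_erase hg, htg⟩
  have hle := hmax _ ⟨⟨hN'1, hN'2⟩, hN't⟩
  have hsub : insert s(x, y) (M ∩ N) ⊆ M ∩ insert s(x, y) (N.erase f) := by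
    intro g hg
    rcases Finset.mem_insert.1 hg with rfl | hg
    · simp [heM]
    · rw [Finset.mem_inter] at hg
      have : g ≠ f := by rintro rfl; exact hfM hg.1
      simp [hg.1, hg.2, this]
  have h7 := Finset.card_le_card hsub
  rw [Finset.card_insert_of_notMem (by simp [heN])] at h7
  omega

lemma gallai {V : Type*} [Fintype V] (G : SimpleGraph V)
    (hall : ∀ v, ∃ N, MaxM G N ∧ ¬ Cov N v) (u v : V) (h : G.Reachable u v) : NRel G u v := by
  obtain ⟨p⟩ := h
  induction p with
  | nil => intro M _ _ _; rfl
  | cons hadj p ih =>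
    exact gallai_trans G hall _ _ _ (fun M hM h1 h2 => (not_both G M hM _ _ hadj h1 h2).elim) ih

lemma sum_comp {V : Type*} [Fintype V] (G : SimpleGraph V) (f : V → ℕ) :
    ∑ v, f v = ∑ c : G.ConnectedComponent, ∑ v : c.supp, f v := by
  rw [← Finset.sum_fiberwise Finset.univ G.connectedComponentMk f]
  refine Finset.sum_congr rfl (fun c _ => ?_)
  exact Finset.sum_subtype _ (fun v => by simp) f

lemma comp_degree {V : Type*} [Fintype V] (G : SimpleGraph V) (c : G.ConnectedComponent)
    (v : c.supp) : (G.induce c.supp).degree v = G.degree v := by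
  rw [← SimpleGraph.card_neighborFinset_eq_degree, ← SimpleGraph.card_neighborFinset_eq_degree]
  refine Finset.card_bij (fun w _ => w.1) ?_ ?_ ?_
  · intro w hw
    simpa using hw
  · intro a _ b _ h
    exact Subtype.ext h
  · intro b hb
    have hb' : G.Adj v b := by simpa using hb
    exact ⟨⟨b, (c.mem_supp_congr_adj hb').1 v.2⟩, by simpa using hb', rfl⟩

lemma sum_edges {V : Type*} [Fintype V] (G : SimpleGraph V) :
    G.edgeFinset.card = ∑ c : G.ConnectedComponent, (G.induce c.supp).edgeFinset.card := by
  have h1 := G.sum_degrees_eq_twice_card_edges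
  rw [sum_comp G] at h1
  have h2 : ∀ c : G.ConnectedComponent, ∑ v : c.supp, G.degree v
      = 2 * (G.induce c.supp).edgeFinset.card := by
    intro c
    rw [← SimpleGraph.sum_degrees_eq_twice_card_edges]
    exact Finset.sum_congr rfl (fun v _ => (comp_degree G c v).symm)
  rw [Finset.sum_congr rfl (fun c _ => h2 c), ← Finset.mul_sum] at h1
  omega

/-- Restriction of a matching to a component. -/
noncomputable def resM {V : Type*} [Fintype V] (G : SimpleGraph V) (c : G.ConnectedComponent)
    (M : Finset (Sym2 V)) : Finset (Sym2 c.supp) :=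
  Finset.univ.filter (fun e => e.map Subtype.val ∈ M)

lemma resM_matching {V : Type*} [Fintype V] (G : SimpleGraph V) (c : G.ConnectedComponent)
    (M : Finset (Sym2 V)) (hM : IsMatchingFinset G M) :
    IsMatchingFinset (G.induce c.supp) (resM G c M) := by
  refine ⟨?_, ?_⟩
  · intro e he
    have he' : e.map Subtype.val ∈ M := by simpa [resM] using he
    induction e using Sym2.ind with
    | _ x y => exact hM.1 he'
  · intro e he f hf hne v hv
    have he' : e.map Subtype.val ∈ M := by simpa [resM] using he
    have hf' : f.map Subtype.val ∈ M := by simpa [resM] using hf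
    refine hM.2 _ he' _ hf' (fun h => hne (Sym2.map.injective Subtype.val_injective h)) v.1 ?_
    exact ⟨Sym2.mem_map.2 ⟨v, hv.1, rfl⟩, Sym2.mem_map.2 ⟨v, hv.2, rfl⟩⟩

lemma resM_cov {V : Type*} [Fintype V] (G : SimpleGraph V) (c : G.ConnectedComponent)
    (M : Finset (Sym2 V)) (hM : IsMatchingFinset G M) (v : c.supp) :
    Cov (resM G c M) v ↔ Cov M v.1 := by
  constructor
  · rintro ⟨e, he, hv⟩
    exact ⟨e.map Subtype.val, by simpa [resM] using he, Sym2.mem_map.2 ⟨v, hv, rfl⟩⟩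
  · rintro ⟨e, he, w, rfl⟩
    have hadj : G.Adj v w := hM.1 he
    refine ⟨s(v, ⟨w, (c.mem_supp_congr_adj hadj).1 v.2⟩), ?_, by simp⟩
    simpa [resM] using he

lemma resM_count {V : Type*} [Fintype V] (G : SimpleGraph V) (c : G.ConnectedComponent)
    (M : Finset (Sym2 V)) (hM : IsMatchingFinset G M) :
    (Finset.univ.filter (fun v : c.supp => Cov M v.1)).card = 2 * (resM G c M).card := by
  rw [← card_cov _ _ (resM_matching G c M hM)]
  congr 1
  ext v
  simp [resM_cov G c M hM v]

lemma comp_card {V : Type*} [Fintype V] (G : SimpleGraph V)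
    (hall : ∀ v, ∃ N, MaxM G N ∧ ¬ Cov N v) (c : G.ConnectedComponent)
    (M : Finset (Sym2 V)) (hM : MaxM G M) :
    Fintype.card c.supp = 2 * (resM G c M).card + 1 := by
  have key : ∀ N, MaxM G N → Fintype.card c.supp =
      2 * (resM G c N).card + (Finset.univ.filter (fun v : c.supp => ¬ Cov N v.1)).card := by
    intro N hN
    rw [← resM_count G c N hN.1, Finset.card_filter_add_card_filter_not, Finset.card_univ]
  have le1 : ∀ N, MaxM G N →
      (Finset.univ.filter (fun v : c.supp => ¬ Cov N v.1)).card ≤ 1 := by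
    intro N hN
    rw [Finset.card_le_one]
    intro a ha b hb
    simp only [Finset.mem_filter, Finset.mem_univ, true_and] at ha hb
    apply Subtype.ext
    refine gallai G hall a.1 b.1 ?_ N hN ha hb
    exact SimpleGraph.ConnectedComponent.exact (a.2.trans b.2.symm)
  obtain ⟨v, hv⟩ := c.nonempty_supp
  obtain ⟨N, hN, hNv⟩ := hall v
  have h1 := key N hN
  have h2 := le1 N hN
  have h3 : 0 < (Finset.univ.filter (fun v : c.supp => ¬ Cov N v.1)).card :=
    Finset.card_pos.2 ⟨⟨v, hv⟩, by simpa using hNv⟩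
  have h4 := key M hM
  have h5 := le1 M hM
  omega

lemma comp_nu {V : Type*} [Fintype V] (G : SimpleGraph V)
    (hall : ∀ v, ∃ N, MaxM G N ∧ ¬ Cov N v) (c : G.ConnectedComponent)
    (M : Finset (Sym2 V)) (hM : MaxM G M) :
    matchingNumber (G.induce c.supp) = (resM G c M).card := by
  have h1 := comp_card G hall c M hM
  have h2 := card_le_mn _ _ (resM_matching G c M hM.1)
  obtain ⟨N, hN⟩ := exists_maxM (G.induce c.supp)
  have h3 := two_card_le _ N hN.1
  have h4 := hN.2
  omega

lemma sum_nu {V : Type*} [Fintype V] (G : SimpleGraph V)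
    (hall : ∀ v, ∃ N, MaxM G N ∧ ¬ Cov N v) :
    matchingNumber G = ∑ c : G.ConnectedComponent, matchingNumber (G.induce c.supp) := by
  obtain ⟨M, hM⟩ := exists_maxM G
  have h1 := card_cov G M hM.1
  rw [Finset.card_filter, sum_comp G] at h1
  have h2 : ∀ c : G.ConnectedComponent, ∑ v : c.supp, (if Cov M v.1 then 1 else 0)
      = 2 * matchingNumber (G.induce c.supp) := by
    intro c
    rw [comp_nu G hall c M hM, ← resM_count G c M hM.1, Finset.card_filter]
  rw [Finset.sum_congr rfl (fun c _ => h2 c), ← Finset.mul_sum] at h1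
  have := hM.2
  omega

lemma arith (d k e : ℕ) (hd : 2 ≤ d) (h1 : 2 * e ≤ d * (2 * k + 1)) (h2 : e ≤ k * (2 * k + 1)) :
    ((d + 1) / 2) * e ≤ (d * ((d + 1) / 2) + d / 2) * k ∧
    (((d + 1) / 2) * e = (d * ((d + 1) / 2) + d / 2) * k → k = 0 ∨ k = (d + 1) / 2) := by
  obtain ⟨a, ha⟩ : ∃ a, a = (d + 1) / 2 := ⟨_, rfl⟩
  obtain ⟨f, hf⟩ : ∃ f, f = d / 2 := ⟨_, rfl⟩
  rw [← ha, ← hf]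
  have hf1 : 1 ≤ f := by omega
  have ha1 : 1 ≤ a := by omega
  rcases Nat.lt_or_ge k a with hk | hk
  · have h3 : 2 * k + 1 ≤ d := by omega
    have h4 : e ≤ k * d := h2.trans (Nat.mul_le_mul_left k h3)
    have h5 : a * e ≤ a * (k * d) := Nat.mul_le_mul_left a h4
    refine ⟨by nlinarith, fun h => Or.inl ?_⟩
    have : f * k ≤ 0 := by nlinarith
    rcases Nat.eq_zero_of_le_zero this |> Nat.mul_eq_zero.1 with h | h <;> omega
  · have h4 : e ≤ d * k + f := by
      have : 2 * e ≤ 2 * (d * k) + d := by linarith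
      omega
    have h5 : a * e ≤ a * (d * k + f) := Nat.mul_le_mul_left a h4
    have h6 : f * a ≤ f * k := Nat.mul_le_mul_left f hk
    refine ⟨by nlinarith, fun h => Or.inr ?_⟩
    have : f * k ≤ f * a := by nlinarith
    have := Nat.le_of_mul_le_mul_left this hf1
    omega

lemma comp_bound {V : Type*} [Fintype V] (G : SimpleGraph V)
    (hall : ∀ v, ∃ N, MaxM G N ∧ ¬ Cov N v) (d : ℕ) (hd : 2 ≤ d) (hdeg : ∀ v, G.degree v ≤ d)
    (c : G.ConnectedComponent) :
    ((d + 1) / 2) * (G.induce c.supp).edgeFinset.card ≤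
      (d * ((d + 1) / 2) + d / 2) * matchingNumber (G.induce c.supp) ∧
    (((d + 1) / 2) * (G.induce c.supp).edgeFinset.card =
      (d * ((d + 1) / 2) + d / 2) * matchingNumber (G.induce c.supp) →
      matchingNumber (G.induce c.supp) = 0 ∨
      matchingNumber (G.induce c.supp) = (d + 1) / 2) := by
  obtain ⟨M, hM⟩ := exists_maxM G
  have h1 := comp_card G hall c M hM
  rw [← comp_nu G hall c M hM] at h1
  apply arith d _ _ hd
  · rw [← SimpleGraph.sum_degrees_eq_twice_card_edges, ← h1]
    calc ∑ v, (G.induce c.supp).degree v ≤ ∑ v : c.supp, d :=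
          Finset.sum_le_sum (fun v _ => (comp_degree G c v).le.trans (hdeg v))
      _ = d * Fintype.card c.supp := by simp [mul_comm]
  · refine SimpleGraph.card_edgeFinset_le_card_choose_two.trans ?_
    rw [h1, Nat.choose_two_right]
    apply Nat.div_le_of_le_mul
    simp only [Nat.add_sub_cancel]
    apply le_of_eq
    ring

lemma bound {V : Type*} [Fintype V] (d : ℕ) (hd : 2 ≤ d) (n : ℕ) : ∀ (G : SimpleGraph V),
    matchingNumber G = n → (∀ v, G.degree v ≤ d) →
    ((d + 1) / 2) * G.edgeFinset.card ≤ (d * ((d + 1) / 2) + d / 2) * n ∧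
    (((d + 1) / 2) * G.edgeFinset.card = (d * ((d + 1) / 2) + d / 2) * n →
      ∀ v, ∃ N, MaxM G N ∧ ¬ Cov N v) := by
  induction n using Nat.strong_induction_on with
  | _ n ih =>
  intro G hn hdeg
  by_cases hall : ∀ v, ∃ N, MaxM G N ∧ ¬ Cov N v
  · refine ⟨?_, fun _ => hall⟩
    rw [sum_edges, ← hn, sum_nu G hall, Finset.mul_sum, Finset.mul_sum]
    exact Finset.sum_le_sum (fun c _ => (comp_bound G hall d hd hdeg c).1)
  · have hlt : ((d + 1) / 2) * G.edgeFinset.card < (d * ((d + 1) / 2) + d / 2) * n := by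
      push Not at hall
      obtain ⟨v, hv⟩ := hall
      obtain ⟨H, hH⟩ : ∃ H, H = G.deleteIncidenceSet v := ⟨_, rfl⟩
      have hsub : H ≤ G := hH ▸ G.deleteIncidenceSet_le v
      obtain ⟨M, hM⟩ := exists_maxM H
      have hMG : IsMatchingFinset G M :=
        ⟨hM.1.1.trans (SimpleGraph.edgeSet_mono hsub), hM.1.2⟩
      have hMv : ¬ Cov M v := by
        rintro ⟨e, he, w, rfl⟩
        have : H.Adj v w := hM.1.1 he
        rw [hH, SimpleGraph.deleteIncidenceSet_adj] at this
        exact this.2.1 rfl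
      have hlt : matchingNumber H < n := by
        rw [← hn, ← hM.2]
        refine lt_of_le_of_ne (card_le_mn G M hMG) (fun h => hMv (hv M ⟨hMG, h⟩))
      have h1 := (ih _ hlt H rfl (fun w =>
        (SimpleGraph.degree_le_of_le hsub).trans (hdeg w))).1
      have h2 := G.card_edgeFinset_deleteIncidenceSet v
      have h3 : G.edgeFinset.card ≤ H.edgeFinset.card + d := by
        have := hdeg v
        have h2' : H.edgeFinset.card = G.edgeFinset.card - G.degree v := by
          rw [← h2]
          subst hH
          congr!
        omega
      have h4 := Nat.mul_le_mul_left ((d + 1) / 2) h3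
      have h5 := Nat.mul_le_mul_left (d * ((d + 1) / 2) + d / 2) (Nat.succ_le_of_lt hlt)
      have h6 : 1 ≤ d / 2 := by omega
      rw [Nat.succ_eq_add_one] at h5
      nlinarith
    exact ⟨hlt.le, fun h => absurd h hlt.ne⟩

theorem stmt_7 {V : Type*} [Fintype V] (G : SimpleGraph V) (hΔ : 2 ≤ G.maxDegree)
    (hν : 2 ≤ matchingNumber G)
    (hiso : ∀ v : V, 0 < G.degree v)
    (hdvd : (G.maxDegree + 1) / 2 ∣ matchingNumber G)
    (hE : G.edgeFinset.card =
      G.maxDegree * matchingNumber G +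
        (matchingNumber G / ((G.maxDegree + 1) / 2)) * (G.maxDegree / 2)) :
    ∀ c : G.ConnectedComponent,
      matchingNumber (G.induce c.supp) = (G.maxDegree + 1) / 2 ∧
      (G.induce c.supp).edgeFinset.card =
        G.maxDegree * ((G.maxDegree + 1) / 2) + G.maxDegree / 2 := by
  have ha : 1 ≤ (G.maxDegree + 1) / 2 := by omega
  have hdeg : ∀ v, G.degree v ≤ G.maxDegree := fun v => G.degree_le_maxDegree v
  have heq : ((G.maxDegree + 1) / 2) * G.edgeFinset.card =
      (G.maxDegree * ((G.maxDegree + 1) / 2) + G.maxDegree / 2) * matchingNumber G := by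
    rw [hE]
    obtain ⟨q, hq⟩ := hdvd
    rw [hq, Nat.mul_div_cancel_left _ ha]
    ring
  have hall := (bound G.maxDegree hΔ _ G rfl hdeg).2 heq
  have hcb := comp_bound G hall G.maxDegree hΔ hdeg
  rw [sum_edges, sum_nu G hall, Finset.mul_sum, Finset.mul_sum,
    Finset.sum_eq_sum_iff_of_le (fun c _ => (hcb c).1)] at heq
  intro c
  have hc := heq c (Finset.mem_univ c)
  have hk : matchingNumber (G.induce c.supp) = (G.maxDegree + 1) / 2 := by
    rcases (hcb c).2 hc with h | h
    · exfalso
      obtain ⟨v, hv⟩ := c.nonempty_supp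
      have h0 := hiso v
      rw [SimpleGraph.degree_pos_iff_exists_adj] at h0
      obtain ⟨w, hw⟩ := h0
      obtain ⟨M, hM⟩ := exists_maxM G
      have h1 := comp_card G hall c M hM
      rw [← comp_nu G hall c M hM, h] at h1
      have h2 : Fintype.card c.supp ≤ 1 := by omega
      rw [Fintype.card_le_one_iff] at h2
      have h3 := h2 ⟨v, hv⟩ ⟨w, (c.mem_supp_congr_adj hw).1 hv⟩
      exact hw.ne (congrArg Subtype.val h3)
    · exact h
  refine ⟨hk, ?_⟩
  rw [hk, mul_comm] at hc
  exact Nat.eq_of_mul_eq_mul_right ha hc
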